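/- arXiv:2511.19501 — 6 statements merged into one kernel-verified Lean document; each statement's English description precedes it below -/
import Mathlib

section
/- Let n ∈ ℕ, J : Fin n → Fin n → ℝ, h : Fin n → ℝ, μ ∈ ℝ, and consider the Max-Cut graph associated with (J, h, μ). Let α ∈ ℝ with 0 < α ≤ 1 and let z_GW ∈ ℝ satisfy the Goemans–Williamson guarantee z_GW - W⁻ ≥ α * (z* - W⁻). Then LB_GW := -(2/α) * z_GW + (2/α - 2) * W⁻ + W satisfies LB_GW ≤ H(σ) for every spin configuration σ : Fin n → ℝ; in particular LB_GW is a lower bound on the minimum of H over spin configurations. -/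
/-!
Put the spin `+1` on the extra vertex `0`, extending `σ` to `τ = Fin.cons 1 σ`. The field term then
becomes the interaction of the spins with vertex `0`, so `H(σ) = ∑_{u < v} w u v * τ u * τ v`
(`isingH_eq_pairEnergy`). Since `τ u * τ v` is `-1` on cut edges and `1` on the others, this energy
is `W - 2 g(S)` for `S = {τ = 1}` (`pairEnergy_eq_totalWeight_sub`). Hence `H(σ) ≥ W - 2 z*`, and
the Goemans–Williamson guarantee bounds `z*` by `(z_GW - W⁻) / α + W⁻`.
-/

open Finset

noncomputable section

/-- Cut value `g(S)`: sum of weights over pairs `u < v` with exactly one endpoint in `S`. -/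
def cutValue {N : ℕ} (w : Fin N → Fin N → ℝ) (S : Finset (Fin N)) : ℝ :=
  ∑ u, ∑ v, if u < v ∧ ((u ∈ S ∧ v ∉ S) ∨ (u ∉ S ∧ v ∈ S)) then w u v else 0

/-- Total weight `W`: sum of weights over pairs `u < v`. -/
def totalWeight {N : ℕ} (w : Fin N → Fin N → ℝ) : ℝ :=
  ∑ u, ∑ v, if u < v then w u v else 0

/-- Negative weight `W⁻`: sum of negative weights over pairs `u < v`. -/
def negWeight {N : ℕ} (w : Fin N → Fin N → ℝ) : ℝ :=
  ∑ u, ∑ v, if u < v ∧ w u v < 0 then w u v else 0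

/-- Maximum cut value `z*`: maximum of `g(S)` over all subsets `S` of `Fin N`. -/
def maxCut {N : ℕ} (w : Fin N → Fin N → ℝ) : ℝ :=
  Finset.univ.sup' Finset.univ_nonempty (cutValue w)

/-- The Ising Hamiltonian `H(σ)`. -/
def isingH {n : ℕ} (J : Fin n → Fin n → ℝ) (h : Fin n → ℝ) (μ : ℝ) (σ : Fin n → ℝ) : ℝ :=
  -(∑ i, ∑ j, if i < j then J i j * σ i * σ j else 0) - μ * ∑ i, h i * σ i

/-- A spin configuration takes values in `{-1, 1}`. -/
def IsSpin {n : ℕ} (σ : Fin n → ℝ) : Prop := ∀ i, σ i ∈ ({-1, 1} : Set ℝ)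

/-- The energy of `σ` is the zero-field pair energy of `σ` extended by `+1` at vertex `0`. -/
lemma isingH_eq_pairEnergy {n : ℕ} (J : Fin n → Fin n → ℝ) (h : Fin n → ℝ) (μ : ℝ)
    (w : Fin (n + 1) → Fin (n + 1) → ℝ)
    (hwJ : ∀ i j : Fin n, i < j → w i.succ j.succ = -J i j)
    (hwh : ∀ i : Fin n, w 0 i.succ = -μ * h i) (σ : Fin n → ℝ) :
    isingH J h μ σ = ∑ u, ∑ v, if u < v then
      w u v * (Fin.cons 1 σ : Fin (n + 1) → ℝ) u * (Fin.cons 1 σ : Fin (n + 1) → ℝ) v else 0 := by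
  have hJ : ∀ i j : Fin n, (if i < j then w i.succ j.succ * σ i * σ j else 0) =
      -(if i < j then J i j * σ i * σ j else 0) := by
    intro i j
    split_ifs with hij
    · rw [hwJ i j hij]; ring
    · simp
  simp only [Fin.sum_univ_succ, Fin.cons_zero, Fin.cons_succ, Fin.succ_lt_succ_iff, Fin.succ_pos,
    Fin.not_lt_zero, if_true, if_false, hJ, hwh, isingH, Finset.sum_neg_distrib,
    Finset.mul_sum, zero_add, mul_one]
  rw [sub_eq_add_neg, add_comm, ← Finset.sum_neg_distrib (fun i => μ * (h i * σ i))]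
  congr 1
  exact Finset.sum_congr rfl fun i _ => by ring

lemma pairEnergy_eq_totalWeight_sub {N : ℕ} (w : Fin N → Fin N → ℝ) (τ : Fin N → ℝ)
    (hτ : IsSpin τ) :
    (∑ u, ∑ v, if u < v then w u v * τ u * τ v else 0) =
      totalWeight w - 2 * cutValue w {u | τ u = 1} := by
  simp only [totalWeight, cutValue, Finset.mul_sum, ← Finset.sum_sub_distrib]
  refine Finset.sum_congr rfl fun u _ => Finset.sum_congr rfl fun v _ => ?_
  by_cases huv : u < v
  · have hspin : ∀ x, τ x = -1 ∨ τ x = 1 := fun x => by simpa using hτ x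
    have hne : (-1 : ℝ) ≠ 1 := by norm_num
    rcases hspin u with hu | hu <;> rcases hspin v with hv | hv <;>
      simp only [huv, hu, hv, hne, Finset.mem_filter, Finset.mem_univ, true_and, and_true,
        not_true_eq_false, not_false_eq_true, and_false, or_false, false_or,
        if_true, if_false] <;> ring
  · simp [huv]

theorem gw_lower_bound {n : ℕ} (J : Fin n → Fin n → ℝ) (h : Fin n → ℝ) (μ : ℝ)
    (w : Fin (n + 1) → Fin (n + 1) → ℝ)
    (hsymm : ∀ u v, w u v = w v u) (hdiag : ∀ u, w u u = 0)
    (hwJ : ∀ i j : Fin n, i < j → w i.succ j.succ = -J i j)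
    (hwh : ∀ i : Fin n, w 0 i.succ = -μ * h i)
    (α : ℝ) (hα0 : 0 < α) (hα1 : α ≤ 1)
    (zGW : ℝ) (hGW : zGW - negWeight w ≥ α * (maxCut w - negWeight w)) :
    ∀ σ : Fin n → ℝ, IsSpin σ →
      -(2 / α) * zGW + (2 / α - 2) * negWeight w + totalWeight w ≤ isingH J h μ σ := by
  intro σ hσ
  have hτ : IsSpin (Fin.cons 1 σ : Fin (n + 1) → ℝ) := by
    intro u
    refine Fin.cases ?_ (fun i => ?_) u
    · simp
    · simpa using hσ i
  have hcut := Finset.le_sup' (cutValue w)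
    (Finset.mem_univ ({u | (Fin.cons 1 σ : Fin (n + 1) → ℝ) u = 1} : Finset (Fin (n + 1))))
  change _ ≤ maxCut w at hcut
  rw [isingH_eq_pairEnergy J h μ w hwJ hwh, pairEnergy_eq_totalWeight_sub w _ hτ]
  have hz : maxCut w - negWeight w ≤ (zGW - negWeight w) / α := by
    rw [le_div_iff₀ hα0]
    linarith
  have hLB : -(2 / α) * zGW + (2 / α - 2) * negWeight w + totalWeight w =
      totalWeight w - 2 * ((zGW - negWeight w) / α + negWeight w) := by ring
  linarith

end
end

section
/- Let n ∈ ℕ, J : Fin n → Fin n → ℝ, h : Fin n → ℝ, μ ∈ ℝ, and consider the Max-Cut graph associated with (J, h, μ). Let α ∈ ℝ with 0 < α ≤ 1 and let z_GW ∈ ℝ satisfy both the Goemans–Williamson guarantee z_GW - W⁻ ≥ α * (z* - W⁻) and z_GW ≤ z*. Let Hmin be the minimum of H(σ) over all spin configurations σ and LB_GW := -(2/α) * z_GW + (2/α - 2) * W⁻ + W. Then (1/α) * Hmin - ((1 - α)/α) * (W - 2 * W⁻) ≤ LB_GW ≤ Hmin. -/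
/-!
The argument is the identity `H(σ) = W - 2 g(S)`. For signs `s u = ±1` on the vertices of the
Max-Cut graph, `s u * s v = 1 - 2 * [u and v on different sides]`, so `∑_{u<v} w u v * s u * s v`
equals `W - 2 g(S)`; flipping all signs so that the field vertex `0` has sign `1` turns this sum
into the Ising Hamiltonian (`isingH_spinOfCut`). Every spin configuration arises from a cut
(`exists_spinOfCut_eq`), hence `Hmin = W - 2 z*` (`eq_of_isLeast_isingH`), and both bounds on the
Goemans–Williamson value become linear inequalities after multiplication by `α`.
-/

open Finset

noncomputable section

/-- The spin configuration of a cut `S`: a spin is `1` exactly when its vertex lies on the same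
side of the cut as the field vertex `0`. -/
def spinOfCut {n : ℕ} (S : Finset (Fin (n + 1))) (i : Fin n) : ℝ :=
  if (i.succ ∈ S ↔ 0 ∈ S) then 1 else -1

lemma isSpin_spinOfCut {n : ℕ} (S : Finset (Fin (n + 1))) : IsSpin (spinOfCut S) := by
  intro i
  unfold spinOfCut
  split_ifs <;> simp

lemma exists_spinOfCut_eq {n : ℕ} {σ : Fin n → ℝ} (hσ : IsSpin σ) :
    ∃ S : Finset (Fin (n + 1)), spinOfCut S = σ := by
  classical
  refine ⟨univ.filter fun u => ∃ i : Fin n, u = i.succ ∧ σ i = -1, ?_⟩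
  funext i
  have h0 : ∀ j : Fin n, (0 : Fin (n + 1)) ≠ j.succ := fun j => (Fin.succ_ne_zero j).symm
  rcases hσ i with h | h
  · simp [spinOfCut, h, h0]
  · rw [Set.mem_singleton_iff] at h
    have h1 : (1 : ℝ) ≠ -1 := by norm_num
    simp [spinOfCut, h, h0, h1]

lemma isingH_spinOfCut {n : ℕ} {J : Fin n → Fin n → ℝ} {h : Fin n → ℝ} {μ : ℝ}
    {w : Fin (n + 1) → Fin (n + 1) → ℝ}
    (hwJ : ∀ i j : Fin n, i < j → w i.succ j.succ = -J i j)
    (hwh : ∀ i : Fin n, w 0 i.succ = -μ * h i) (S : Finset (Fin (n + 1))) :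
    isingH J h μ (spinOfCut S) = totalWeight w - 2 * cutValue w S := by
  -- Sums over pairs `u < v` split into pairs `0 < i.succ` (the field) and `i.succ < j.succ`.
  simp only [isingH, totalWeight, cutValue, Fin.sum_univ_succ, false_and,
    if_false, Fin.succ_pos, true_and, if_true, Fin.not_lt_zero, Fin.succ_lt_succ_iff, zero_add]
  have field : ∀ i : Fin n, -(μ * (h i * spinOfCut S i)) = w 0 i.succ -
      2 * (if (0 ∈ S ∧ i.succ ∉ S ∨ 0 ∉ S ∧ i.succ ∈ S) then w 0 i.succ else 0) := by
    intro i
    rw [hwh, spinOfCut]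
    by_cases h0 : (0 : Fin (n + 1)) ∈ S <;> by_cases h1 : i.succ ∈ S <;> simp [h0, h1] <;> ring
  have coupling : ∀ i j : Fin n,
      -(if i < j then J i j * spinOfCut S i * spinOfCut S j else 0) =
        (if i < j then w i.succ j.succ else 0) -
        2 * (if i < j ∧ (i.succ ∈ S ∧ j.succ ∉ S ∨ i.succ ∉ S ∧ j.succ ∈ S)
          then w i.succ j.succ else 0) := by
    intro i j
    by_cases hij : i < j
    · rw [hwJ i j hij, spinOfCut, spinOfCut]
      by_cases h0 : (0 : Fin (n + 1)) ∈ S <;> by_cases h1 : i.succ ∈ S <;>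
        by_cases h2 : j.succ ∈ S <;> simp [hij, h0, h1, h2] <;> ring
    · simp [hij]
  have hfield := Finset.sum_congr (rfl : (univ : Finset (Fin n)) = univ) fun i _ => field i
  have hcoupling := Finset.sum_congr (rfl : (univ : Finset (Fin n)) = univ) fun i _ =>
    Finset.sum_congr (rfl : (univ : Finset (Fin n)) = univ) fun j _ => coupling i j
  simp only [Finset.sum_neg_distrib, Finset.sum_sub_distrib, ← Finset.mul_sum]
    at hfield hcoupling
  linarith

/-- The ground-state energy is `W - 2 z*`. -/
lemma eq_of_isLeast_isingH {n : ℕ} {J : Fin n → Fin n → ℝ} {h : Fin n → ℝ} {μ : ℝ}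
    {w : Fin (n + 1) → Fin (n + 1) → ℝ}
    (hwJ : ∀ i j : Fin n, i < j → w i.succ j.succ = -J i j)
    (hwh : ∀ i : Fin n, w 0 i.succ = -μ * h i) {Hmin : ℝ}
    (hHmin : IsLeast {x : ℝ | ∃ σ : Fin n → ℝ, IsSpin σ ∧ isingH J h μ σ = x} Hmin) :
    Hmin = totalWeight w - 2 * maxCut w := by
  apply le_antisymm
  · obtain ⟨S, -, hS⟩ := Finset.exists_mem_eq_sup' Finset.univ_nonempty (cutValue w)
    rw [maxCut, hS, ← isingH_spinOfCut hwJ hwh S]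
    exact hHmin.2 ⟨_, isSpin_spinOfCut S, rfl⟩
  · obtain ⟨σ, hσ, rfl⟩ := hHmin.1
    obtain ⟨S, rfl⟩ := exists_spinOfCut_eq hσ
    rw [isingH_spinOfCut hwJ hwh S]
    have : cutValue w S ≤ maxCut w := Finset.le_sup' (cutValue w) (Finset.mem_univ S)
    linarith

theorem gw_bound_sandwich {n : ℕ} (J : Fin n → Fin n → ℝ) (h : Fin n → ℝ) (μ : ℝ)
    (w : Fin (n + 1) → Fin (n + 1) → ℝ)
    (hsymm : ∀ u v, w u v = w v u) (hdiag : ∀ u, w u u = 0)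
    (hwJ : ∀ i j : Fin n, i < j → w i.succ j.succ = -J i j)
    (hwh : ∀ i : Fin n, w 0 i.succ = -μ * h i)
    (α : ℝ) (hα0 : 0 < α) (hα1 : α ≤ 1)
    (zGW : ℝ) (hGW : zGW - negWeight w ≥ α * (maxCut w - negWeight w))
    (hle : zGW ≤ maxCut w)
    (Hmin : ℝ)
    (hHmin : IsLeast {x : ℝ | ∃ σ : Fin n → ℝ, IsSpin σ ∧ isingH J h μ σ = x} Hmin) :
    (1 / α) * Hmin - ((1 - α) / α) * (totalWeight w - 2 * negWeight w) ≤
        -(2 / α) * zGW + (2 / α - 2) * negWeight w + totalWeight w ∧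
      -(2 / α) * zGW + (2 / α - 2) * negWeight w + totalWeight w ≤ Hmin := by
  have hinv : 0 < α⁻¹ := inv_pos.mpr hα0
  rw [eq_of_isLeast_isingH hwJ hwh hHmin]
  constructor
  · have key : -(2 / α) * zGW + (2 / α - 2) * negWeight w + totalWeight w -
        ((1 / α) * (totalWeight w - 2 * maxCut w) -
          ((1 - α) / α) * (totalWeight w - 2 * negWeight w)) =
        2 * (α⁻¹ * (maxCut w - zGW)) := by
      field_simp
      ring
    have := mul_nonneg hinv.le (sub_nonneg.mpr hle)
    linarith
  · have key : totalWeight w - 2 * maxCut w -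
        (-(2 / α) * zGW + (2 / α - 2) * negWeight w + totalWeight w) =
        2 * (α⁻¹ * (zGW - negWeight w - α * (maxCut w - negWeight w))) := by
      field_simp
      ring
    have := mul_nonneg hinv.le (sub_nonneg.mpr hGW)
    linarith

end
end

section
/- Let n ∈ ℕ, J : Fin n → Fin n → ℝ, h : Fin n → ℝ, μ ∈ ℝ, and consider the Max-Cut graph associated with (J, h, μ). Then the minimum of H(σ) over all spin configurations σ : Fin n → ℝ equals -2 * z* + W, where z* and W are the maximum cut value and total weight of the associated graph on Fin (n + 1). -/
/-!
A subset `S` of the vertices is encoded by the signs `s u = -1` for `u ∈ S` and `s u = 1` otherwise.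
An edge is cut exactly when `s u * s v = -1`, so the quadratic form `∑ w u v * s u * s v` over
`u < v` is the weight of the uncut edges minus that of the cut ones, `W - 2 g(S)`
(`totalWeight_sub_cutValue`). The vertex `0` is a ghost spin carrying the external field: since
`s 0 ^ 2 = 1`, the same quadratic form is the Hamiltonian at the spins `s 0 * s i.succ`
(`isingH_gauge`). Every spin configuration arises in this way, with `s 0 = 1`, hence minimizing `H`
is maximizing the cut.
-/

open Finset

noncomputable section

/-- The sign vector of a cut: `-1` on `S` and `1` off `S`. -/
def cutSign {N : ℕ} (S : Finset (Fin N)) (u : Fin N) : ℝ := if u ∈ S then -1 else 1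

/-- The quadratic form of the weights, each unordered pair being counted once. -/
def pairForm {N : ℕ} (w : Fin N → Fin N → ℝ) (s : Fin N → ℝ) : ℝ :=
  ∑ u, ∑ v, if u < v then w u v * (s u * s v) else 0

lemma totalWeight_sub_cutValue {N : ℕ} (w : Fin N → Fin N → ℝ) (S : Finset (Fin N)) :
    -2 * cutValue w S + totalWeight w = pairForm w (cutSign S) := by
  unfold cutValue totalWeight pairForm
  simp only [Finset.mul_sum, ← Finset.sum_add_distrib]
  refine Finset.sum_congr rfl fun u _ => Finset.sum_congr rfl fun v _ => ?_
  by_cases huv : u < v <;> by_cases hu : u ∈ S <;> by_cases hv : v ∈ S <;>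
    simp [cutSign, huv, hu, hv] <;> ring

/-- Multiplying all signs by `s 0` turns the ghost spin at vertex `0` into `1`, and the edges at
that vertex into the field term. -/
lemma isingH_gauge {n : ℕ} (J : Fin n → Fin n → ℝ) (h : Fin n → ℝ) (μ : ℝ)
    (w : Fin (n + 1) → Fin (n + 1) → ℝ)
    (hwJ : ∀ i j : Fin n, i < j → w i.succ j.succ = -J i j)
    (hwh : ∀ i : Fin n, w 0 i.succ = -μ * h i)
    (s : Fin (n + 1) → ℝ) (hs : s 0 * s 0 = 1) :
    isingH J h μ (fun i => s 0 * s i.succ) = pairForm w s := by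
  unfold isingH pairForm
  simp only [Fin.sum_univ_succ, lt_irrefl, if_false, Fin.succ_pos, if_true, Fin.not_lt_zero,
    Fin.succ_lt_succ_iff, zero_add]
  rw [Finset.mul_sum, sub_eq_add_neg, add_comm, ← Finset.sum_neg_distrib,
    ← Finset.sum_neg_distrib]
  congr 1
  · refine Finset.sum_congr rfl fun i _ => ?_
    rw [hwh]
    ring
  · refine Finset.sum_congr rfl fun i _ => ?_
    rw [← Finset.sum_neg_distrib]
    refine Finset.sum_congr rfl fun j _ => ?_
    split_ifs with hij
    · rw [hwJ i j hij]
      linear_combination (-J i j * s i.succ * s j.succ) * hs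
    · simp

theorem ising_min_eq_maxcut {n : ℕ} (J : Fin n → Fin n → ℝ) (h : Fin n → ℝ) (μ : ℝ)
    (w : Fin (n + 1) → Fin (n + 1) → ℝ)
    (hsymm : ∀ u v, w u v = w v u) (hdiag : ∀ u, w u u = 0)
    (hwJ : ∀ i j : Fin n, i < j → w i.succ j.succ = -J i j)
    (hwh : ∀ i : Fin n, w 0 i.succ = -μ * h i) :
    IsLeast {x : ℝ | ∃ σ : Fin n → ℝ, IsSpin σ ∧ isingH J h μ σ = x}
      (-2 * maxCut w + totalWeight w) := by
  constructor
  · obtain ⟨S, -, hS⟩ := Finset.exists_mem_eq_sup' Finset.univ_nonempty (cutValue w)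
    refine ⟨fun i => cutSign S 0 * cutSign S i.succ, fun i => ?_, ?_⟩
    · simp only [cutSign]
      split_ifs <;> simp
    · rw [maxCut, hS, totalWeight_sub_cutValue]
      refine isingH_gauge J h μ w hwJ hwh _ ?_
      simp only [cutSign]
      split_ifs <;> norm_num
  · rintro x ⟨σ, hσ, rfl⟩
    let S : Finset (Fin (n + 1)) := {u | (Fin.cons 1 σ : Fin (n + 1) → ℝ) u = -1}
    have h0 : cutSign S 0 = 1 := by
      rw [cutSign, if_neg]
      simp only [S, Finset.mem_filter, Fin.cons_zero]
      norm_num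
    have hi : ∀ i : Fin n, cutSign S i.succ = σ i := by
      intro i
      rcases hσ i with hi | hi
      · simp [cutSign, S, hi]
      · have hi' : σ i = 1 := hi
        rw [cutSign, if_neg, hi']
        simp only [S, Finset.mem_filter, Fin.cons_succ, hi']
        norm_num
    have hH := isingH_gauge J h μ w hwJ hwh (cutSign S) (by rw [h0, one_mul])
    simp only [h0, hi, one_mul] at hH
    have hle : cutValue w S ≤ maxCut w := Finset.le_sup' (cutValue w) (Finset.mem_univ S)
    rw [hH, ← totalWeight_sub_cutValue]
    linarith

end
end

section
/- Let m, n ∈ ℕ, A : Matrix (Fin m) (Fin n) ℝ, b : Fin m → ℝ, c : Fin n → ℝ, M ∈ ℝ, and α ∈ ℝ with 0 < α ≤ 1. Define h : Fin n → ℝ by h i = c i - 2 * M * (∑ j, A j i * b j) + M * ∑ k, (∑ j, A j i * A j k), and the constant C' = (1/4) * M * (∑ i, ∑ k, ∑ j, A j i * A j k) + (1/2) * ∑ i, c i - M * (∑ j, ∑ i, b j * A j i) + M * ∑ j, (b j)^2 + (1/4) * M * ∑ i, ∑ j, (A j i)^2 - (1/4) * M * ∑ i, ∑ j, (A j i)^2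 where the last two terms are understood as follows: C' = C + (1/4) * ∑ i, Q i i with Q = M • (Aᵀ * A) and C = (1/4) * M * (∑ i, ∑ k, (Aᵀ * A) i k) + (1/2) * ∑ i, c i - M * (∑ j, ∑ i, b j * A j i) + M * ∑ j, (b j)^2. Consider the complete graph on Fin (n + 1) with symmetric weights w given by w (Fin.succ i) (Fin.succ j) = (1/2) * Q i j for i < j and w 0 (Fin.succ i) = (1/2) * h i, with total weight W, negative weight W⁻ and maximum cut value z* as in the Max-Cut setup. If z_GW ∈ ℝ satisfies the Goemans–Williamson guarantee z_GW - W⁻ ≥ α * (z* - W⁻), then for every x : Fin n → ℝ with x i ∈ ({0, 1} : Set ℝ) for all i and A.mulVec x = b, one has -(2/α) * z_GW + (2/α - 2) * W⁻ + W + C' ≤ ∑ i, c i * x i. In other words, the Goemans–Williamson based lower bound plus the constant term is a valid lower bound on the optimal value of the binary linear program. -/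
/-!
With the spins `y i = 2 * x i - 1`, which are `1` or `-1`, the penalized objective of a binary
vector is an Ising energy `∑ i, ∑ k, Q i k * y i * y k / 4 + ∑ i, h i * y i / 2 + C`
(`ising_eq_of_feasible`; the penalty vanishes at a feasible `x`). The diagonal of `Q` contributes the
constant `C' - C` because `y i ^ 2 = 1`, and an extra vertex `0` of spin `1` turns the linear part
into edges. What remains is `∑ u < v, w u v * s u * s v = W - 2 * g(S)`, where `S` is the set of
vertices of spin `1` (`sum_spin_eq_totalWeight_sub`). Hence the objective equals `W - 2 * g(S) + C'`,
which is at least `W - 2 * z* + C'`, and the Goemans–Williamson guarantee bounds `z*` from above.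
-/

open Finset

noncomputable section

open Matrix

/-- The Ising energy of a spin configuration `s` is the total weight minus twice the cut
separating the spins `1` from the spins `-1`. -/
theorem sum_spin_eq_totalWeight_sub {N : ℕ} (w : Fin N → Fin N → ℝ) (s : Fin N → ℝ)
    (hs : ∀ u, s u = 1 ∨ s u = -1) :
    (∑ u, ∑ v, if u < v then w u v * (s u * s v) else 0)
      = totalWeight w - 2 * cutValue w (univ.filter fun u => s u = 1) := by
  unfold totalWeight cutValue
  simp only [Finset.mul_sum, ← Finset.sum_sub_distrib]
  refine Finset.sum_congr rfl fun u _ => Finset.sum_congr rfl fun v _ => ?_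
  have hne : (-1 : ℝ) ≠ 1 := by norm_num
  by_cases huv : u < v
  · rcases hs u with hu | hu <;> rcases hs v with hv | hv <;>
      simp [huv, hu, hv, hne] <;> ring
  · simp [huv]

theorem sum_sum_eq_diag_add_two_mul {n : ℕ} (f : Fin n → Fin n → ℝ)
    (hf : ∀ i k, f i k = f k i) :
    ∑ i, ∑ k, f i k = ∑ i, f i i + 2 * ∑ i, ∑ k, if i < k then f i k else 0 := by
  have hsplit : ∀ i k, f i k = (if i = k then f i k else 0) + (if i < k then f i k else 0)
      + (if k < i then f k i else 0) := by
    intro i k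
    rcases lt_trichotomy i k with hik | hik | hik
    · simp [hik, hik.ne, hik.not_gt]
    · simp [hik]
    · simp [hik, hik.ne', hik.not_gt, hf i k]
  have hswap : (∑ i, ∑ k, if k < i then f k i else 0) = ∑ i, ∑ k, if i < k then f i k else 0 :=
    Finset.sum_comm
  calc ∑ i, ∑ k, f i k
      = ∑ i, ∑ k, ((if i = k then f i k else 0) + (if i < k then f i k else 0)
          + (if k < i then f k i else 0)) :=
        Finset.sum_congr rfl fun i _ => Finset.sum_congr rfl fun k _ => hsplit i k
    _ = ∑ i, f i i + 2 * ∑ i, ∑ k, if i < k then f i k else 0 := by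
        simp only [Finset.sum_add_distrib, hswap]
        simp
        ring

/-- A sum over the pairs `u < v` of `Fin (n + 1)` splits into the pairs through `0` and the rest. -/
theorem sum_lt_succ {n : ℕ} (f : Fin (n + 1) → Fin (n + 1) → ℝ) :
    (∑ u, ∑ v, if u < v then f u v else 0)
      = ∑ i : Fin n, f 0 i.succ
        + ∑ i : Fin n, ∑ k : Fin n, if i < k then f i.succ k.succ else 0 := by
  simp [Fin.sum_univ_succ]

/-- The penalized objective in the spin variables `y = 2 * x - 1`, at a point satisfying the
constraints; `y` need not be a spin configuration here. -/
theorem ising_eq_of_feasible {m n : ℕ} (A : Matrix (Fin m) (Fin n) ℝ) (b : Fin m → ℝ)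
    (c x : Fin n → ℝ) (M : ℝ) (hx : A.mulVec x = b) :
    (1 / 4) * (∑ i, ∑ k, (M • (Aᵀ * A)) i k * ((2 * x i - 1) * (2 * x k - 1)))
      + (1 / 2) * ∑ i, (c i - 2 * M * (∑ j, A j i * b j)
          + M * ∑ k, ∑ j, A j i * A j k) * (2 * x i - 1)
      + ((1 / 4) * M * (∑ i, ∑ k, (Aᵀ * A) i k) + (1 / 2) * ∑ i, c i
        - M * (∑ j, ∑ i, b j * A j i) + M * ∑ j, (b j) ^ 2)
      = ∑ i, c i * x i := by
  set y : Fin n → ℝ := fun i => 2 * x i - 1 with hy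
  set r : Fin m → ℝ := fun j => ∑ i, A j i with hr
  set t : Fin m → ℝ := fun j => ∑ i, A j i * y i with ht
  have hrt : ∀ j, r j + t j = 2 * b j := by
    intro j
    rw [← hx]
    simp only [hr, ht, hy, Matrix.mulVec, dotProduct, Finset.mul_sum, ← Finset.sum_add_distrib]
    exact Finset.sum_congr rfl fun i _ => by ring
  have e1 : ∑ i, ∑ k, (M • (Aᵀ * A)) i k * (y i * y k) = M * ∑ j, t j * t j := by
    simp only [ht, Matrix.smul_apply, Matrix.mul_apply, Matrix.transpose_apply, smul_eq_mul,
      Finset.mul_sum, Finset.sum_mul]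
    rw [Finset.sum_comm_cycle]
    refine Finset.sum_congr rfl fun j _ => Finset.sum_congr rfl fun i _ =>
      Finset.sum_congr rfl fun k _ => by ring
  have e2 : ∑ i, (∑ j, A j i * b j) * y i = ∑ j, b j * t j := by
    simp only [ht, Finset.mul_sum, Finset.sum_mul]
    rw [Finset.sum_comm]
    exact Finset.sum_congr rfl fun j _ => Finset.sum_congr rfl fun i _ => by ring
  have e3 : ∑ i, (∑ k, ∑ j, A j i * A j k) * y i = ∑ j, t j * r j := by
    simp only [ht, hr, Finset.sum_mul]
    rw [Finset.sum_comm_cycle]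
    refine Finset.sum_congr rfl fun j _ => Finset.sum_congr rfl fun i _ => ?_
    rw [Finset.mul_sum]
    exact Finset.sum_congr rfl fun k _ => by ring
  have e4 : ∑ i, ∑ k, (Aᵀ * A) i k = ∑ j, r j * r j := by
    simp only [hr, Matrix.mul_apply, Matrix.transpose_apply, Finset.sum_mul_sum]
    rw [Finset.sum_comm_cycle]
  have e5 : ∑ j, ∑ i, b j * A j i = ∑ j, b j * r j := by
    simp only [hr, Finset.mul_sum]
  have e6 : ∑ i, (c i - 2 * M * (∑ j, A j i * b j) + M * ∑ k, ∑ j, A j i * A j k) * y i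
      = ∑ i, c i * y i - 2 * M * ∑ j, b j * t j + M * ∑ j, t j * r j := by
    rw [← e2, ← e3, Finset.mul_sum, Finset.mul_sum, ← Finset.sum_sub_distrib,
      ← Finset.sum_add_distrib]
    exact Finset.sum_congr rfl fun i _ => by ring
  have e7 : ∑ i, c i * y i = 2 * ∑ i, c i * x i - ∑ i, c i := by
    rw [Finset.mul_sum, ← Finset.sum_sub_distrib]
    exact Finset.sum_congr rfl fun i _ => by simp only [hy]; ring
  -- The quadratic penalty in terms of `r` and `t`: each summand is `((r j + t j) / 2 - b j) ^ 2`.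
  have e8 : (1 / 4) * ∑ j, t j * t j - ∑ j, b j * t j + (1 / 2) * ∑ j, t j * r j
      + (1 / 4) * ∑ j, r j * r j - ∑ j, b j * r j + ∑ j, (b j) ^ 2 = 0 := by
    simp only [Finset.mul_sum, ← Finset.sum_sub_distrib, ← Finset.sum_add_distrib]
    refine Finset.sum_eq_zero fun j _ => ?_
    have hb : b j = (r j + t j) / 2 := by linarith [hrt j]
    rw [hb]
    ring
  change (1 / 4) * (∑ i, ∑ k, (M • (Aᵀ * A)) i k * (y i * y k))
      + (1 / 2) * ∑ i, (c i - 2 * M * (∑ j, A j i * b j)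
          + M * ∑ k, ∑ j, A j i * A j k) * y i + _ = _
  rw [e1, e6, e4, e5, e7]
  linear_combination M * e8

theorem gw_bound_for_blp {m n : ℕ} (A : Matrix (Fin m) (Fin n) ℝ) (b : Fin m → ℝ)
    (c : Fin n → ℝ) (M : ℝ) (α : ℝ) (hα0 : 0 < α) (hα1 : α ≤ 1)
    (h : Fin n → ℝ)
    (hdef : ∀ i, h i = c i - 2 * M * (∑ j, A j i * b j) + M * ∑ k, ∑ j, A j i * A j k)
    (C C' : ℝ)
    (hC : C = (1 / 4) * M * (∑ i, ∑ k, (Aᵀ * A) i k) + (1 / 2) * ∑ i, c i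
        - M * (∑ j, ∑ i, b j * A j i) + M * ∑ j, (b j) ^ 2)
    (hC' : C' = C + (1 / 4) * ∑ i, (M • (Aᵀ * A)) i i)
    (w : Fin (n + 1) → Fin (n + 1) → ℝ)
    (hsymm : ∀ u v, w u v = w v u) (hdiag : ∀ u, w u u = 0)
    (hwQ : ∀ i j : Fin n, i < j → w i.succ j.succ = (1 / 2) * (M • (Aᵀ * A)) i j)
    (hwh : ∀ i : Fin n, w 0 i.succ = (1 / 2) * h i)
    (zGW : ℝ) (hGW : zGW - negWeight w ≥ α * (maxCut w - negWeight w)) :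
    ∀ x : Fin n → ℝ, (∀ i, x i ∈ ({0, 1} : Set ℝ)) → A.mulVec x = b →
      -(2 / α) * zGW + (2 / α - 2) * negWeight w + totalWeight w + C' ≤
        ∑ i, c i * x i := by
  intro x hbin hx
  set y : Fin n → ℝ := fun i => 2 * x i - 1 with hy
  have hy1 : ∀ i, y i = 1 ∨ y i = -1 := by
    intro i
    rcases hbin i with h0 | h1
    · right; simp only [hy, h0]; norm_num
    · left; rw [Set.mem_singleton_iff] at h1; simp only [hy, h1]; norm_num
  -- The auxiliary vertex `0` gets spin `1`.
  set s : Fin (n + 1) → ℝ := Fin.cons 1 y with hs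
  have hs1 : ∀ u, s u = 1 ∨ s u = -1 := by
    intro u
    refine Fin.cases (Or.inl rfl) (fun i => ?_) u
    simpa [hs] using hy1 i
  have hcut := sum_spin_eq_totalWeight_sub w s hs1
  have hmax : cutValue w (univ.filter fun u => s u = 1) ≤ maxCut w :=
    Finset.le_sup' (cutValue w) (Finset.mem_univ _)
  have hising := ising_eq_of_feasible A b c x M hx
  rw [← hC] at hising
  simp only [← hdef] at hising
  have hQsymm : ∀ i k, (M • (Aᵀ * A)) i k = (M • (Aᵀ * A)) k i := by
    intro i k
    simp only [Matrix.smul_apply, Matrix.mul_apply, Matrix.transpose_apply, mul_comm]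
  have hquad := sum_sum_eq_diag_add_two_mul
    (fun i k => (M • (Aᵀ * A)) i k * (y i * y k))
    (fun i k => by rw [hQsymm i k, mul_comm (y i)])
  have hdiagsum : ∑ i, (M • (Aᵀ * A)) i i * (y i * y i) = ∑ i, (M • (Aᵀ * A)) i i := by
    refine Finset.sum_congr rfl fun i _ => ?_
    rcases hy1 i with e | e <;> rw [e] <;> ring
  rw [sum_lt_succ (fun u v => w u v * (s u * s v))] at hcut
  have hlin : ∑ i : Fin n, w 0 i.succ * (s 0 * s i.succ) = (1 / 2) * ∑ i, h i * y i := by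
    rw [Finset.mul_sum]
    refine Finset.sum_congr rfl fun i _ => ?_
    simp only [hs, Fin.cons_zero, Fin.cons_succ, hwh]
    ring
  have hoff : (∑ i : Fin n, ∑ k : Fin n,
        if i < k then w i.succ k.succ * (s i.succ * s k.succ) else 0)
      = (1 / 2) * ∑ i, ∑ k, if i < k then (M • (Aᵀ * A)) i k * (y i * y k) else 0 := by
    simp only [Finset.mul_sum]
    refine Finset.sum_congr rfl fun i _ => Finset.sum_congr rfl fun k _ => ?_
    split_ifs with hik
    · rw [hwQ i k hik]
      simp only [hs, Fin.cons_succ]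
      ring
    · simp
  have hval : ∑ i, c i * x i
      = totalWeight w - 2 * cutValue w (univ.filter fun u => s u = 1) + C' := by
    rw [hlin, hoff] at hcut
    simp only [hdiagsum] at hquad
    linear_combination -hising + hcut + (1 / 4) * hquad - hC'
  have hGW' : maxCut w - negWeight w ≤ (zGW - negWeight w) / α := by
    rw [le_div_iff₀ hα0]
    linarith
  have hexp : -(2 / α) * zGW + (2 / α - 2) * negWeight w
      = -2 * ((zGW - negWeight w) / α) - 2 * negWeight w := by
    ring
  linarith

end
end

section
/- Let m, n ∈ ℕ, A : Matrix (Fin m) (Fin n) ℝ, b : Fin m → ℝ, c : Fin n → ℝ. Let κ ∈ ℝ with κ > 0 be such that every binary x' with A.mulVec x' ≠ b satisfies ∑ j, (A.mulVec x' j - b j)^2 ≥ κ, and let M ∈ ℝ with M > (∑ i, |c i|) / κ. Then for every feasible binary x and every binary x' with A.mulVec x' ≠ b, one has ∑ i, c i * x i < (∑ i, c i * x' i) + M * ∑ j, (A.mulVec x' j - b j)^2. (Validity of the big-M value.) -/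
/-!
For binary `x` and `x'` every `x i - x' i` lies in `{-1, 0, 1}`, so the objective values differ by
at most `∑ i, |c i|`. Since `∑ i, |c i| < M * κ`, and an infeasible `x'` has squared residual at
least `κ`, the penalty outweighs any possible gain in the objective.
-/

open Finset Matrix

theorem bigM_validity {m n : ℕ} (A : Matrix (Fin m) (Fin n) ℝ)
    (b : Fin m → ℝ) (c : Fin n → ℝ) (κ : ℝ) (hκ : 0 < κ)
    (hgap : ∀ x' : Fin n → ℝ, (∀ i, x' i ∈ ({0, 1} : Set ℝ)) → A.mulVec x' ≠ b →
      κ ≤ ∑ j, (A.mulVec x' j - b j) ^ 2)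
    (M : ℝ) (hM : M > (∑ i, |c i|) / κ) :
    ∀ x : Fin n → ℝ, (∀ i, x i ∈ ({0, 1} : Set ℝ)) → A.mulVec x = b →
      ∀ x' : Fin n → ℝ, (∀ i, x' i ∈ ({0, 1} : Set ℝ)) → A.mulVec x' ≠ b →
        ∑ i, c i * x i < (∑ i, c i * x' i) + M * ∑ j, (A.mulVec x' j - b j) ^ 2 := by
  intro x hx _ x' hx' hne
  have hgain : ∑ i, c i * x i ≤ (∑ i, c i * x' i) + ∑ i, |c i| := by
    rw [← Finset.sum_add_distrib]
    refine Finset.sum_le_sum fun i _ => ?_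
    have h1 := le_abs_self (c i)
    have h2 := neg_abs_le (c i)
    have h3 := abs_nonneg (c i)
    rcases hx i with h | h <;> rcases hx' i with h' | h' <;> rw [h, h'] <;> linarith
  have hM0 : 0 ≤ M :=
    (div_nonneg (Finset.sum_nonneg fun i _ => abs_nonneg (c i)) hκ.le).trans hM.le
  have hMκ : ∑ i, |c i| < M * κ := (div_lt_iff₀ hκ).1 hM
  have hpen := mul_le_mul_of_nonneg_left (hgap x' hx' hne) hM0
  linarith
end

section
/- Let m, n ∈ ℕ, A : Matrix (Fin m) (Fin n) ℝ, b : Fin m → ℝ, c : Fin n → ℝ. Let κ ∈ ℝ with κ > 0 be such that every binary x' with A.mulVec x' ≠ b satisfies ∑ j, (A.mulVec x' j - b j)^2 ≥ κ, and let M ∈ ℝ with M > (∑ i, |c i|) / κ. Assume there exists at least one feasible binary x₀. If x* is a binary vector minimizing the penalized objective, i.e. f(x*) ≤ f(x) for every binary x, then x* is feasible (A.mulVec x* = b) and ∑ i, c i * x* i ≤ ∑ i, c i * x i for every feasible binary x. (The penalized unconstrained problem is an exact reformulation of the constrained problem.) -/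
/-!
Two binary vectors have linear costs differing by at most `∑ i, |c i|`. An infeasible binary
vector pays a penalty of at least `M * κ > ∑ i, |c i|`, so it costs strictly more than any feasible
one and cannot be a minimizer. On feasible vectors the penalty vanishes, so minimizing the penalized
objective there is minimizing the linear cost.
-/

open Finset Matrix

theorem binary_cost_sub_le {n : ℕ} (c x y : Fin n → ℝ)
    (hx : ∀ i, x i ∈ ({0, 1} : Set ℝ)) (hy : ∀ i, y i ∈ ({0, 1} : Set ℝ)) :
    (∑ i, c i * x i) - ∑ i, c i * y i ≤ ∑ i, |c i| := by
  rw [← Finset.sum_sub_distrib]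
  refine Finset.sum_le_sum fun i _ => ?_
  have h1 := le_abs_self (c i)
  have h2 := neg_abs_le (c i)
  rcases hx i with h | h <;> rcases hy i with h' | h' <;> rw [h, h'] <;> linarith

theorem penalty_eq_zero {m n : ℕ} {A : Matrix (Fin m) (Fin n) ℝ} {b : Fin m → ℝ}
    {x : Fin n → ℝ} (hx : A.mulVec x = b) : ∑ j, (A.mulVec x j - b j) ^ 2 = 0 := by
  simp [hx]

theorem penalized_exact_reformulation {m n : ℕ} (A : Matrix (Fin m) (Fin n) ℝ)
    (b : Fin m → ℝ) (c : Fin n → ℝ) (κ : ℝ) (hκ : 0 < κ)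
    (hgap : ∀ x' : Fin n → ℝ, (∀ i, x' i ∈ ({0, 1} : Set ℝ)) → A.mulVec x' ≠ b →
      κ ≤ ∑ j, (A.mulVec x' j - b j) ^ 2)
    (M : ℝ) (hM : M > (∑ i, |c i|) / κ)
    (hex : ∃ x₀ : Fin n → ℝ, (∀ i, x₀ i ∈ ({0, 1} : Set ℝ)) ∧ A.mulVec x₀ = b)
    (xstar : Fin n → ℝ) (hxstar : ∀ i, xstar i ∈ ({0, 1} : Set ℝ))
    (hmin : ∀ x : Fin n → ℝ, (∀ i, x i ∈ ({0, 1} : Set ℝ)) →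
      (∑ i, c i * xstar i) + M * ∑ j, (A.mulVec xstar j - b j) ^ 2 ≤
        (∑ i, c i * x i) + M * ∑ j, (A.mulVec x j - b j) ^ 2) :
    A.mulVec xstar = b ∧
      ∀ x : Fin n → ℝ, (∀ i, x i ∈ ({0, 1} : Set ℝ)) → A.mulVec x = b →
        ∑ i, c i * xstar i ≤ ∑ i, c i * x i := by
  have hfeas : A.mulVec xstar = b := by
    by_contra hne
    obtain ⟨x₀, hx₀, hAx₀⟩ := hex
    have hS : 0 ≤ ∑ i, |c i| := Finset.sum_nonneg fun i _ => abs_nonneg _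
    have hM0 : 0 < M := lt_of_le_of_lt (div_nonneg hS hκ.le) hM
    have hMκ : ∑ i, |c i| < M * κ := (div_lt_iff₀ hκ).1 hM
    have hpen := mul_le_mul_of_nonneg_left (hgap xstar hxstar hne) hM0.le
    have hle := hmin x₀ hx₀
    rw [penalty_eq_zero hAx₀] at hle
    have hcost := binary_cost_sub_le c x₀ xstar hx₀ hxstar
    linarith
  refine ⟨hfeas, fun x hx hAx => ?_⟩
  have hle := hmin x hx
  rw [penalty_eq_zero hAx, penalty_eq_zero hfeas] at hle
  linarith
end
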